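/- Let α ≤ β ≤ −1 be negative integers, let N be a real number that is not a nonpositive integer, let M = (M_i)_{i≥0} be real parameters with M_i ∉ {0,1}, and let F be a finite set of positive integers with {−β, …, −α−β−1} ⊆ F. Write λ^{α,β}(v) = v(v+α+β+1). Then for every n ∈ σ_F, the exceptional Hahn polynomial h_n^{α,β,N;M,F} satisfies the second order difference equation h_{−1}(x)·h_n^{α,β,N;M,F}(x−1) + h_0(x)·h_n^{α,β,N;M,F}(x) + h_1(x)·h_n^{α,β,N;M,F}(x+1) = λ^{α,β}(n−u_F)·h_n^{α,β,N;M,F}(x) for every x at which Ω_{M,F}^{α,β,N}(x)·Ω_{M,F}^{α,β,N}(x+1) ≠ 0, where h_{−1}(x) = x(x−β−N−1)·Ω_{M,F}^{α,β,N}(x+1)/Ω_{M,F}^{α,β,N}(x), h_1(x) = (x+α+n_F+1)(x−N+n_F)·Ω_{M,F}^{α,β,N}(x)/Ω_{M,F}^{α,β,N}(x+1), and h_0(x) = −(x+n_F)(x−β−N−1+n_F) − (x+α+1+n_F)(x−N+n_F) + [(x+1+α+n_F)(x−N+n_F)·Λ_{M,F}^{α,β,N}(x+1)/Ω_{M,F}^{α,β,N}(x+1)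 − (x+α+n_F)(x−N−1+n_F)·Λ_{M,F}^{α,β,N}(x)/Ω_{M,F}^{α,β,N}(x)]. -/

import Mathlib

open Finset MeasureTheory

noncomputable section ExceptionalHahnJacobi

/-- Pochhammer symbol `(z)_m = z (z+1) ⋯ (z+m-1)`. -/
def poch (z : ℝ) (m : ℕ) : ℝ := ∏ i ∈ Finset.range m, (z + (i : ℝ))

/-- Pochhammer symbol with integer exponent; `(z)_{-k} = 1 / ((z-1)(z-2)⋯(z-k))`. -/
def pochZ (z : ℝ) (m : ℤ) : ℝ :=
  if 0 ≤ m then poch z m.toNat else 1 / poch (z - ((-m).toNat : ℝ)) (-m).toNat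

/-- Generalized binomial coefficient `C(z, k) = z(z-1)⋯(z-k+1)/k!`. -/
def genBinom (z : ℝ) (k : ℕ) : ℝ := (∏ i ∈ Finset.range k, (z - (i : ℝ))) / (k.factorial : ℝ)

/-- `λ^{a,b}(x) = x (x + a + b + 1)`. -/
def lam (a b x : ℝ) : ℝ := x * (x + a + b + 1)

/-- Hahn polynomial `h_n^{a,b,N}(x)`. -/
def hahn (a b N : ℝ) (n : ℕ) (x : ℝ) : ℝ :=
  ∑ j ∈ Finset.range (n + 1),
    poch (-(n : ℝ)) j * poch (a + b + (n : ℝ) + 1) j * poch (-N + (j : ℝ)) (n - j) *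
      poch (a + (j : ℝ) + 1) (n - j) * poch (-x) j / (j.factorial : ℝ)

/-- Dual Hahn polynomial `R_n^{a,b,N}(x)`. -/
def dualHahn (a b N : ℝ) (n : ℕ) (x : ℝ) : ℝ :=
  ∑ j ∈ Finset.range (n + 1),
    poch (-(n : ℝ)) j * poch (-N + (j : ℝ)) (n - j) * poch (a + (j : ℝ) + 1) (n - j) /
        ((n.factorial : ℝ) * (-1 : ℝ) ^ j * (j.factorial : ℝ)) *
      ∏ i ∈ Finset.range j, (x - (i : ℝ) * (a + b + 1 + (i : ℝ)))

/-- Dual Hahn polynomial with integer degree; zero for negative degree. -/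
def dualHahnZ (a b N : ℝ) (m : ℤ) (x : ℝ) : ℝ :=
  if 0 ≤ m then dualHahn a b N m.toNat x else 0

/-- Jacobi polynomial `P_n^{a,b}(x)`. -/
def jacobiP (a b : ℝ) (n : ℕ) (x : ℝ) : ℝ :=
  (2 : ℝ)⁻¹ ^ n * ∑ j ∈ Finset.range (n + 1),
    genBinom ((n : ℝ) + a) j * genBinom ((n : ℝ) + b) (n - j) * (x - 1) ^ (n - j) * (x + 1) ^ j

/-- The function `φ_u^{α,β,N}(s,x)`, a normalized terminating ₃F₂. -/
def phiH (α β : ℤ) (N : ℝ) (u : ℕ) (s x : ℝ) : ℝ :=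
  poch ((α : ℝ) + 1) (max u (-α - β - (u : ℤ) - 1).toNat) *
    poch (-N) (max u (-α - β - (u : ℤ) - 1).toNat) *
    ∑ j ∈ Finset.range (u + 1),
      poch (-(u : ℝ)) j * poch ((u : ℝ) - s + (α : ℝ) + (β : ℝ) + 1) j * poch (-x) j /
        (poch ((α : ℝ) - s + 1) j * poch (-N) j * (j.factorial : ℝ))

/-- The polynomials `Ĥ_n^{α,β,N;M}(x)`. -/
def Hhat (α β : ℤ) (N : ℝ) (M : ℕ → ℝ) (n : ℕ) (x : ℝ) : ℝ :=
  if ⌈((-α - β : ℤ) : ℚ) / 2⌉ ≤ (n : ℤ) ∧ (n : ℤ) ≤ -α - 1 then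
    deriv (fun s => phiH α β N n s x) 0 -
      deriv (fun s => phiH α β N (-α - β - (n : ℤ) - 1).toNat s x) 0
  else if -α ≤ (n : ℤ) ∧ (n : ℤ) ≤ -α - β - 1 then
    (-1 : ℝ) ^ ((β : ℤ) + (n : ℤ)) * ((β + (n : ℤ)).toNat.factorial : ℝ) *
      (((-α - β - (n : ℤ) - 1).toNat.factorial : ℝ) * poch (-x) (-α).toNat *
          hahn (-(α : ℝ)) (β : ℝ) ((α : ℝ) + N) ((α + (n : ℤ)).toNat) (x + (α : ℝ)) +
        (((α + (n : ℤ)).toNat.factorial : ℝ)) *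
            poch (-N - (α : ℝ) - (β : ℝ) - (n : ℝ) - 1) (2 * (n : ℤ) + α + β + 1).toNat /
            (M ((α + (n : ℤ)).toNat) - 1) *
          hahn (α : ℝ) (β : ℝ) N ((-α - β - (n : ℤ) - 1).toNat) x)
  else hahn (α : ℝ) (β : ℝ) N n x

/-- The function `φ_u^{α,β}(s,x)`, a normalized terminating ₂F₁. -/
def phiJ (α β : ℤ) (u : ℕ) (s x : ℝ) : ℝ :=
  poch ((α : ℝ) + 1) (max u (-α - β - (u : ℤ) - 1).toNat) /
      ((max u.factorial (-α - β - (u : ℤ) - 1).toNat.factorial : ℕ) : ℝ) *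
    ∑ j ∈ Finset.range (u + 1),
      poch (-(u : ℝ)) j * poch ((u : ℝ) - s + (α : ℝ) + (β : ℝ) + 1) j /
          (poch ((α : ℝ) - s + 1) j * (j.factorial : ℝ)) * ((1 - x) / 2) ^ j

/-- The polynomials `P̂_n^{α,β;M}(x)`. -/
def Phat (α β : ℤ) (M : ℕ → ℝ) (n : ℕ) (x : ℝ) : ℝ :=
  if ⌈((-α - β : ℤ) : ℚ) / 2⌉ ≤ (n : ℤ) ∧ (n : ℤ) ≤ -α - 1 then
    deriv (fun s => phiJ α β n s x) 0 -
      deriv (fun s => phiJ α β (-α - β - (n : ℤ) - 1).toNat s x) 0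
  else if -α ≤ (n : ℤ) ∧ (n : ℤ) ≤ -α - β - 1 then
    (-1 : ℝ) ^ ((β : ℤ) + (n : ℤ)) *
      ((((n : ℤ) + α).toNat.factorial : ℝ) * (((n : ℤ) + β).toNat.factorial : ℝ) *
        ((-α - β - (n : ℤ) - 1).toNat.factorial : ℝ)) / (n.factorial : ℝ) *
      ((M ((α + (n : ℤ)).toNat) - 1)⁻¹ * jacobiP (α : ℝ) (β : ℝ) ((-α - β - (n : ℤ) - 1).toNat) x +
        ((1 - x) / 2) ^ (-α).toNat * jacobiP (-(α : ℝ)) (β : ℝ) ((α + (n : ℤ)).toNat) x)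
  else jacobiP (α : ℝ) (β : ℝ) n x

/-- `u_F = Σ_{f ∈ F} f - C(n_F + 1, 2)`. -/
def uF (F : Finset ℕ) : ℕ := (∑ f ∈ F, f) - (F.card + 1).choose 2

/-- `n ∈ σ_F = {u_F, u_F + 1, …} \ {u_F + f : f ∈ F}`. -/
def inSigma (F : Finset ℕ) (n : ℕ) : Prop := uF F ≤ n ∧ n - uF F ∉ F

/-- The `i`-th element of `F` in increasing order. -/
def elemOf (F : Finset ℕ) (i : Fin F.card) : ℕ := ((F.orderIsoOfFin rfl i : {x // x ∈ F}) : ℕ)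

/-- The `i`-th element of a finite set of integers, in increasing order. -/
def elemOfZ (S : Finset ℤ) (i : Fin S.card) : ℤ := ((S.orderIsoOfFin rfl i : {x // x ∈ S}) : ℤ)

/-- Exceptional Hahn polynomial `h_n^{α,β,N;M,F}(x)`. -/
def exHahn (α β : ℤ) (N : ℝ) (M : ℕ → ℝ) (F : Finset ℕ) (n : ℕ) (x : ℝ) : ℝ :=
  Matrix.det (Matrix.of fun i j : Fin (F.card + 1) =>
    Fin.cases (Hhat α β N M (n - uF F) (x + ((j : ℕ) : ℝ)))
      (fun k => Hhat α β N M (elemOf F k) (x + ((j : ℕ) : ℝ))) i)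

/-- The polynomial `Ω_{M,F}^{α,β,N}(x)`. -/
def OmegaH (α β : ℤ) (N : ℝ) (M : ℕ → ℝ) (F : Finset ℕ) (x : ℝ) : ℝ :=
  Matrix.det (Matrix.of fun i j : Fin F.card =>
    Hhat α β N M (elemOf F i) (x + ((j : ℕ) : ℝ)))

/-- The polynomial `Λ_{M,F}^{α,β,N}(x)` (columns `j ∈ {1,…,n_F+1}`, `j ≠ n_F`). -/
def LambdaH (α β : ℤ) (N : ℝ) (M : ℕ → ℝ) (F : Finset ℕ) (x : ℝ) : ℝ :=
  Matrix.det (Matrix.of fun i j : Fin F.card =>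
    Hhat α β N M (elemOf F i)
      (x + ((if (j : ℕ) = F.card - 1 then F.card else (j : ℕ) : ℕ) : ℝ)))

/-- Exceptional Jacobi polynomial `P_n^{α,β;M,F}(x)`. -/
def exJacobi (α β : ℤ) (M : ℕ → ℝ) (F : Finset ℕ) (n : ℕ) (x : ℝ) : ℝ :=
  Matrix.det (Matrix.of fun i j : Fin (F.card + 1) =>
    Fin.cases (iteratedDeriv (j : ℕ) (Phat α β M (n - uF F)) x)
      (fun k => iteratedDeriv (j : ℕ) (Phat α β M (elemOf F k)) x) i)

/-- The polynomial `Ω_{M,F}^{α,β}(x)`. -/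
def OmegaJ (α β : ℤ) (M : ℕ → ℝ) (F : Finset ℕ) (x : ℝ) : ℝ :=
  Matrix.det (Matrix.of fun i j : Fin F.card =>
    iteratedDeriv (j : ℕ) (Phat α β M (elemOf F i)) x)

/-- `F_ext = F \ {-β, …, -α-β-1}`. -/
def Fext (α β : ℤ) (F : Finset ℕ) : Finset ℕ :=
  F.filter fun f : ℕ => ((f : ℤ) < -β ∨ -α - β ≤ (f : ℤ))

/-- Admissibility of the data `α, β, M, F`. -/
def IsAdmissible (α β : ℤ) (M : ℕ → ℝ) (F : Finset ℕ) : Prop :=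
  (∀ i : ℕ, (i : ℤ) ≤ -β - 1 → (∀ f ∈ F, (i : ℤ) ≠ -β - (f : ℤ) - 1) →
      Real.sign (M i) =
        Real.sign (∏ f ∈ Fext α β F, (((i : ℝ) - (f : ℝ) - (α : ℝ)) * ((i : ℝ) + (f : ℝ) + (β : ℝ) + 1)))) ∧
  (∀ x : ℤ, 0 ≤ x → (∃ f ∈ F, x ≤ (f : ℤ) + α + β) →
      0 ≤ ∏ f ∈ F.filter (fun f : ℕ => -α - β ≤ (f : ℤ)), (x - (f : ℤ) - α - β))

/-- `U_{F-} = {f + α + β : f ∈ F, 1 ≤ f ≤ -β-1}`. -/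
def UFm (α β : ℤ) (F : Finset ℕ) : Finset ℤ :=
  (F.filter fun f : ℕ => (1 ≤ f ∧ (f : ℤ) ≤ -β - 1)).image fun f : ℕ => (f : ℤ) + α + β

/-- `U_{F+} = {f + α + β : f ∈ F, f ≥ -α-β}`. -/
def UFp (α β : ℤ) (F : Finset ℕ) : Finset ℤ :=
  (F.filter fun f : ℕ => -α - β ≤ (f : ℤ)).image fun f : ℕ => (f : ℤ) + α + β

/-- `U_F = U_{F-} ∪ U_{F+}`. -/
def UF (α β : ℤ) (F : Finset ℕ) : Finset ℤ := UFm α β F ∪ UFp α β F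

/-- The weight of the measure `ω_{α,β,N}^{M,F}` at the point `x`. -/
def wH (α β : ℤ) (N : ℕ) (M : ℕ → ℝ) (F : Finset ℕ) (x : ℕ) : ℝ :=
  genBinom ((α : ℝ) + (F.card : ℝ) + (x : ℝ)) x *
      genBinom ((β : ℝ) + (N : ℝ) - (x : ℝ)) (N - F.card - x) /
    (OmegaH α β (N : ℝ) M F (x : ℝ) * OmegaH α β (N : ℝ) M F ((x : ℝ) + 1))

/-- The weight `ω_{α,β;M,F}(x)` on `[-1,1]`. -/
def wJ (α β : ℤ) (M : ℕ → ℝ) (F : Finset ℕ) (x : ℝ) : ℝ :=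
  (1 - x) ^ (α + (F.card : ℤ)) * (1 + x) ^ (β + (F.card : ℤ)) / (OmegaJ α β M F x) ^ 2

/-- The measure on `[-1,1]` with density `ω_{α,β;M,F}`. -/
def jacobiMeasure (α β : ℤ) (M : ℕ → ℝ) (F : Finset ℕ) : Measure ℝ :=
  (volume.restrict (Set.Icc (-1 : ℝ) 1)).withDensity fun x => ENNReal.ofReal (wJ α β M F x)

/-- Mass of the dual Hahn measure `ρ_{b,a,N̂}` at `λ^{a,b}(x)`. -/
def rhoMass (a b Nh : ℤ) (x : ℕ) : ℝ :=
  (2 * (x : ℝ) + (a : ℝ) + (b : ℝ) + 1) * poch ((b : ℝ) + 1) x * poch (-(Nh : ℝ)) x *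
      (Nh.toNat.factorial : ℝ) /
    ((-1 : ℝ) ^ x * poch ((x : ℝ) + (a : ℝ) + (b : ℝ) + 1) (Nh + 1).toNat *
      poch ((a : ℝ) + 1) x * (x.factorial : ℝ))

/-- Mass of the measure `ν_{a,b,N̂}^{M}` at `λ^{a,b}(s)`. -/
def nuMass (a b Nh : ℤ) (M : ℕ → ℝ) (s : ℤ) : ℝ :=
  if -b ≤ s ∧ s ≤ -1 then
    (2 * (s : ℝ) + (a : ℝ) + (b : ℝ) + 1) * poch ((Nh : ℝ) + 1 - (s : ℝ)) (s + b).toNat /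
        poch ((Nh : ℝ) + (b : ℝ) + 1) (s + a + 1).toNat * M ((s + b).toNat)
  else if 0 ≤ s ∧ s ≤ Nh then
    poch ((Nh : ℝ) + 1) b.toNat ^ 2 / poch ((b : ℝ) + 1) (a - b).toNat * rhoMass a b Nh s.toNat /
      ∏ i ∈ Finset.range b.toNat, (((s : ℝ) + (a : ℝ) + (i : ℝ) + 1) * ((s : ℝ) + (b : ℝ) - (i : ℝ)))
  else 0

/-- `ζ_v` (defined for any integer `v` via `pochZ`). -/
def zetaH (α β : ℤ) (N : ℝ) (v : ℤ) : ℝ :=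
  pochZ (-N - (α : ℝ) - (β : ℝ)) v * poch ((v : ℝ) + 1) (-α).toNat *
    ((v - α - β).toNat.factorial : ℝ)

/-- `θ_v^M`. -/
def thetaM (β : ℤ) (M : ℕ → ℝ) (v : ℕ) : ℝ :=
  if (v : ℤ) ≤ -β - 1 then 1 - M ((-β - 1 - (v : ℤ)).toNat) else 1

/-- `τ_v = ∏_{u ∈ U_F} (λ^{a,b}(v+α+β) - λ^{a,b}(u))` with `a = -α`, `b = -β`. -/
def tauH (α β : ℤ) (F : Finset ℕ) (v : ℕ) : ℝ :=
  ∏ u ∈ UF α β F,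
    (lam ((-α : ℤ) : ℝ) ((-β : ℤ) : ℝ) ((v : ℝ) + (α : ℝ) + (β : ℝ)) -
      lam ((-α : ℤ) : ℝ) ((-β : ℤ) : ℝ) ((u : ℤ) : ℝ))

/-- `ξ_n`. -/
def xiH (α β : ℤ) (N : ℝ) (F : Finset ℕ) (n : ℕ) : ℝ :=
  pochZ (N - (n : ℝ) + 1) ((n : ℤ) + α + β) ^ (α + (F.card : ℤ) + 1) *
    ∏ j ∈ Finset.range (F.card + 1), poch (N - (n : ℝ) - (j : ℝ) + 1) j

/-- `κ_M`. -/
def kappaM (α β : ℤ) (N : ℝ) (M : ℕ → ℝ) (F : Finset ℕ) : ℝ :=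
  (∏ u ∈ UFm α β F, (1 - M ((-u + α - 1).toNat))) * ∏ u ∈ UF α β F, zetaH α β N u

/-- Entry `(i,j)` (0-based) of the determinant defining `q_n^{a,b,N̂;M,U_F}`. -/
def qEntry (α β : ℤ) (N : ℝ) (M : ℕ → ℝ) (F : Finset ℕ) (n : ℕ) (x : ℝ) (i j : ℕ) : ℝ :=
  if i = 0 then
    (-1 : ℝ) ^ j * dualHahnZ (((-α).toNat : ℝ)) (((-β).toNat : ℝ)) (N + (α : ℝ) + (β : ℝ))
      ((n : ℤ) - (-α).toNat + j) x
  else if h1 : i - 1 < (UFm α β F).card then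
    (-1 : ℝ) ^ j * dualHahnZ (((-α).toNat : ℝ)) (((-β).toNat : ℝ)) (N + (α : ℝ) + (β : ℝ))
      ((n : ℤ) - (-α).toNat + j)
      (lam (((-α).toNat : ℝ)) (((-β).toNat : ℝ)) ((elemOfZ (UFm α β F) ⟨i - 1, h1⟩ : ℤ) : ℝ))
  else if i - 1 - (UFm α β F).card < (-α).toNat then
    poch (((-α).toNat : ℝ) + ((-β).toNat : ℝ) + (N + (α : ℝ) + (β : ℝ)) - (n : ℝ) - (j : ℝ) + 1) j *
      Hhat α β (-2 - (N + (α : ℝ) + (β : ℝ))) M ((-β).toNat + (i - 1 - (UFm α β F).card))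
        (-(n : ℝ) + ((-α).toNat : ℝ) - (j : ℝ) - 1)
  else if h3 : i - 1 - (UFm α β F).card - (-α).toNat < (UFp α β F).card then
    (-1 : ℝ) ^ j * dualHahnZ (((-α).toNat : ℝ)) (((-β).toNat : ℝ)) (N + (α : ℝ) + (β : ℝ))
      ((n : ℤ) - (-α).toNat + j)
      (lam (((-α).toNat : ℝ)) (((-β).toNat : ℝ))
        ((elemOfZ (UFp α β F) ⟨i - 1 - (UFm α β F).card - (-α).toNat, h3⟩ : ℤ) : ℝ))
  else 0

/-- The Krall dual Hahn orthogonal polynomial `q_n^{a,b,N̂;M,U_F}(x)`. -/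
def qKrall (α β : ℤ) (N : ℝ) (M : ℕ → ℝ) (F : Finset ℕ) (n : ℕ) (x : ℝ) : ℝ :=
  Matrix.det (Matrix.of fun i j : Fin (1 + (UFm α β F).card + (-α).toNat + (UFp α β F).card) =>
      qEntry α β N M F n x (i : ℕ) (j : ℕ)) /
    ((-1 : ℝ) ^ ((n + (-α).toNat + (-β).toNat) * ((UF α β F).card + 1) +
        ((-α).toNat + (-β).toNat).choose 2 + ((-β).toNat).choose 2 + (-α).toNat) *
      ∏ u ∈ UF α β F, (x - lam (((-α).toNat : ℝ)) (((-β).toNat : ℝ)) ((u : ℤ) : ℝ)))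

/-- Row used in the renormalized determinant `P̄`: for `-α ≤ g ≤ -α-β-1` it is
`(M_{α+g} - 1) · P̂_g` written without the division by `M_{α+g} - 1`. -/
def PhatBarRow (α β : ℤ) (M : ℕ → ℝ) (g : ℕ) (x : ℝ) : ℝ :=
  if -α ≤ (g : ℤ) ∧ (g : ℤ) ≤ -α - β - 1 then
    (-1 : ℝ) ^ ((β : ℤ) + (g : ℤ)) *
      ((((g : ℤ) + α).toNat.factorial : ℝ) * (((g : ℤ) + β).toNat.factorial : ℝ) *
        ((-α - β - (g : ℤ) - 1).toNat.factorial : ℝ)) / (g.factorial : ℝ) *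
      (jacobiP (α : ℝ) (β : ℝ) ((-α - β - (g : ℤ) - 1).toNat) x +
        (M ((α + (g : ℤ)).toNat) - 1) * ((1 - x) / 2) ^ (-α).toNat *
          jacobiP (-(α : ℝ)) (β : ℝ) ((α + (g : ℤ)).toNat) x)
  else Phat α β M g x

/-- The renormalized exceptional Jacobi polynomial
`P̄_n^{α,β;M,F} = (∏_{i=0}^{-β-1} (M_i - 1)) · P_n^{α,β;M,F}`
(written so that the factors `M_i - 1` are distributed into the corresponding rows of the
determinant; this agrees with the product formula whenever all `M_i ≠ 1`). -/
def Pbar (α β : ℤ) (M : ℕ → ℝ) (F : Finset ℕ) (n : ℕ) (x : ℝ) : ℝ :=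
  (∏ i ∈ (Finset.range (-β).toNat).filter
      (fun i : ℕ => (((i : ℤ) - α).toNat ∉ F ∧ ((i : ℤ) - α).toNat ≠ n - uF F)), (M i - 1)) *
    Matrix.det (Matrix.of fun r j : Fin (F.card + 1) =>
      Fin.cases (iteratedDeriv (j : ℕ) (PhatBarRow α β M (n - uF F)) x)
        (fun k => iteratedDeriv (j : ℕ) (PhatBarRow α β M (elemOf F k)) x) r)

end ExceptionalHahnJacobi

/-!
Write `T` for the second order difference operator with eigenfunctions `h_n^{α,β,N}`. Every `Ĥ_n`
is an eigenfunction of `T` with eigenvalue `λ^{α,β}(n)`, except for `⌈(-α-β)/2⌉ ≤ n ≤ -α-1`, where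
differentiating the eigenvalue equation of `φ_n(s, ·)` at `s = 0` gives `T Ĥ_n = λ Ĥ_n + d Ĥ_m` with
`m = -α-β-n-1`. Both `m` and `n` then lie in `{-β, …, -α-1} ⊆ F`, so the span of `(Ĥ_f)_{f ∈ F}` is
invariant under `T`.

For seed functions `f_1, …, f_k` with `T`-invariant span, the map sending `u` to the Casoratian of
`u, f_1, …, f_k` intertwines `T` with another second order difference operator. At a point `x` with
nonzero Casoratian, `u` can be changed by an element of the span so that it vanishes at
`x, …, x+k-1`; only `u(x-1)`, `u(x+k)` and `u(x+k+1)` then contribute, and comparing their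
coefficients determines the transformed operator.
-/

section Casoratian

variable {R : Type*} [CommRing R] {k : ℕ}

/-- The second order difference operator `u ↦ A(x) u(x-1) + B(x) u(x) + C(x) u(x+1)`, acting on
all functions `R → R`. -/
def diffOp (A B C : R → R) : (R → R) →ₗ[R] (R → R) where
  toFun u x := A x * u (x - 1) + B x * u x + C x * u (x + 1)
  map_add' u v := by ext x; simp only [Pi.add_apply]; ring
  map_smul' c u := by ext x; simp only [Pi.smul_apply, smul_eq_mul, RingHom.id_apply]; ring

lemma diffOp_apply (A B C u : R → R) (x : R) :
    diffOp A B C u x = A x * u (x - 1) + B x * u x + C x * u (x + 1) :=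
  rfl

/-- The Casoratian `det (f_i(x + j))` with `0 ≤ i, j < k`, the discrete analogue of the Wronskian
of `f_0, …, f_{k-1}`. -/
def casoratian (f : Fin k → R → R) (x : R) : R :=
  Matrix.det (Matrix.of fun i j : Fin k => f i (x + ((j : ℕ) : R)))

/-- The minor `det (f_i(x + j))`, where `j` runs over `{0, …, k} \ {p}`: the first-row minors of
the Casoratian of `k + 1` functions. It is meant for `p ≤ k`. -/
def casoratianMinor (f : Fin k → R → R) (p : ℕ) (x : R) : R :=
  Matrix.det (Matrix.of fun i j : Fin k =>
    f i (x + ((if (j : ℕ) < p then (j : ℕ) else j + 1 : ℕ) : R)))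

lemma casoratianMinor_zero (f : Fin k → R → R) (x : R) :
    casoratianMinor f 0 x = casoratian f (x + 1) := by
  simp [casoratianMinor, casoratian, add_comm, add_left_comm]

lemma casoratianMinor_last (f : Fin k → R → R) (x : R) :
    casoratianMinor f k x = casoratian f x := by
  simp [casoratianMinor, casoratian]

lemma casoratian_cons_eq_sum (f : Fin k → R → R) (u : R → R) (x : R) :
    casoratian (Fin.cons u f) x =
      ∑ p ∈ range (k + 1), (-1) ^ p * casoratianMinor f p x * u (x + (p : R)) := by
  rw [← Fin.sum_univ_eq_sum_range
      fun p => (-1) ^ p * casoratianMinor f p x * u (x + (p : R)),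
    casoratian, Matrix.det_succ_row_zero]
  refine Finset.sum_congr rfl fun p _ => ?_
  have submatrix_eq : (Matrix.of fun i j : Fin (k + 1) =>
      (Fin.cons u f : Fin (k + 1) → R → R) i (x + ((j : ℕ) : R))).submatrix
        Fin.succ p.succAbove =
      Matrix.of fun i j : Fin k =>
        f i (x + ((if (j : ℕ) < p then (j : ℕ) else j + 1 : ℕ) : R)) := by
    ext i j
    simp [Fin.succAbove, Fin.lt_def, apply_ite Fin.val]
  rw [submatrix_eq, Matrix.of_apply, Fin.cons_zero, casoratianMinor]
  ring

/-- The Darboux transformation with seed functions `f`, sending `u` to the Casoratian of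
`u, f_0, …, f_{k-1}`. -/
def darbouxOp (f : Fin k → R → R) : (R → R) →ₗ[R] (R → R) where
  toFun u := casoratian (Fin.cons u f)
  map_add' u v := by
    ext x
    simp only [casoratian_cons_eq_sum, Pi.add_apply, mul_add, sum_add_distrib]
  map_smul' c u := by
    ext x
    simp only [casoratian_cons_eq_sum, Pi.smul_apply, smul_eq_mul, RingHom.id_apply,
      mul_left_comm _ c, mul_sum]

lemma darbouxOp_apply (f : Fin k → R → R) (u : R → R) (x : R) :
    darbouxOp f u x = casoratian (Fin.cons u f) x :=
  rfl

lemma darbouxOp_eq_sum (f : Fin k → R → R) (u : R → R) (x : R) :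
    darbouxOp f u x =
      ∑ p ∈ range (k + 1), (-1) ^ p * casoratianMinor f p x * u (x + (p : R)) :=
  casoratian_cons_eq_sum f u x

lemma darbouxOp_seed (f : Fin k → R → R) (i : Fin k) : darbouxOp f (f i) = 0 := by
  ext x
  refine Matrix.det_zero_of_row_eq (i := 0) (j := i.succ) (Fin.succ_ne_zero i).symm ?_
  ext j
  simp

lemma darbouxOp_eq_zero_of_mem_span {f : Fin k → R → R} {u : R → R}
    (hu : u ∈ Submodule.span R (Set.range f)) : darbouxOp f u = 0 := by
  have span_le_ker : Submodule.span R (Set.range f) ≤ LinearMap.ker (darbouxOp f) :=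
    Submodule.span_le.2 (Set.range_subset_iff.2 (darbouxOp_seed f))
  exact span_le_ker hu

section VanishingAtNodes

variable {v : R → R} {x : R}

lemma darbouxOp_sub_one_of_vanishing (f : Fin k → R → R)
    (hv : ∀ j < k, v (x + (j : R)) = 0) :
    darbouxOp f v (x - 1) = casoratian f x * v (x - 1) := by
  rw [darbouxOp_eq_sum, sum_range_succ', sum_eq_zero, casoratianMinor_zero]
  · simp
  · intro p hp
    rw [show x - 1 + ((p + 1 : ℕ) : R) = x + p by push_cast; ring, hv p (mem_range.1 hp),
      mul_zero]

lemma darbouxOp_of_vanishing (f : Fin k → R → R) (hv : ∀ j < k, v (x + (j : R)) = 0) :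
    darbouxOp f v x = (-1) ^ k * casoratian f x * v (x + (k : R)) := by
  rw [darbouxOp_eq_sum, sum_range_succ, sum_eq_zero, casoratianMinor_last, zero_add]
  intro p hp
  rw [hv p (mem_range.1 hp), mul_zero]

lemma darbouxOp_add_one_of_vanishing (f : Fin (k + 1) → R → R)
    (hv : ∀ j < k + 1, v (x + (j : R)) = 0) :
    darbouxOp f v (x + 1) =
      (-1) ^ k * casoratianMinor f k (x + 1) * v (x + 1 + (k : R)) +
        (-1) ^ (k + 1) * casoratian f (x + 1) * v (x + 1 + ((k + 1 : ℕ) : R)) := by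
  rw [darbouxOp_eq_sum, sum_range_succ, sum_range_succ, sum_eq_zero, casoratianMinor_last,
    zero_add]
  intro p hp
  rw [show x + 1 + (p : R) = x + ((p + 1 : ℕ) : R) by push_cast; ring,
    hv (p + 1) (Nat.succ_lt_succ (mem_range.1 hp)), mul_zero]

lemma darbouxOp_diffOp_of_vanishing (A B C : R → R) (f : Fin (k + 1) → R → R)
    (hv : ∀ j < k + 1, v (x + (j : R)) = 0) :
    darbouxOp f (diffOp A B C v) x =
      casoratian f (x + 1) * (A x * v (x - 1)) +
        (-1) ^ (k + 1) * casoratian f x *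
          (B (x + ((k + 1 : ℕ) : R)) * v (x + ((k + 1 : ℕ) : R))) +
        ((-1) ^ k * casoratianMinor f k x * (C (x + (k : R)) * v (x + 1 + (k : R))) +
          (-1) ^ (k + 1) * casoratian f x *
            (C (x + ((k + 1 : ℕ) : R)) * v (x + 1 + ((k + 1 : ℕ) : R)))) := by
  simp only [darbouxOp_eq_sum, diffOp_apply, mul_add, sum_add_distrib]
  congr 1
  · congr 1
    · rw [sum_range_succ', sum_eq_zero, casoratianMinor_zero]
      · simp
      · intro p hp
        rw [show x + ((p + 1 : ℕ) : R) - 1 = x + p by push_cast; ring, hv p (mem_range.1 hp),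
          mul_zero, mul_zero]
    · rw [sum_range_succ, sum_eq_zero, casoratianMinor_last, zero_add]
      intro p hp
      rw [hv p (mem_range.1 hp), mul_zero, mul_zero]
  · rw [sum_range_succ, sum_range_succ, sum_eq_zero, casoratianMinor_last, zero_add,
      add_right_comm x (k : R), add_right_comm x ((k + 1 : ℕ) : R)]
    intro p hp
    rw [show x + (p : R) + 1 = x + ((p + 1 : ℕ) : R) by push_cast; ring,
      hv (p + 1) (Nat.succ_lt_succ (mem_range.1 hp)), mul_zero, mul_zero]

end VanishingAtNodes

variable {K : Type*} [Field K]

lemma exists_mem_span_eq_at_nodes {f : Fin k → K → K} {x : K} (hf : casoratian f x ≠ 0)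
    (u : K → K) :
    ∃ w ∈ Submodule.span K (Set.range f), ∀ j < k, w (x + (j : K)) = u (x + (j : K)) := by
  set W : Matrix (Fin k) (Fin k) K := Matrix.of fun i j => f i (x + ((j : ℕ) : K))
  set c : Fin k → K := Matrix.vecMul (fun j : Fin k => u (x + ((j : ℕ) : K))) W⁻¹ with hc
  have vecMul_eq : Matrix.vecMul c W = fun j : Fin k => u (x + ((j : ℕ) : K)) := by
    rw [hc, Matrix.vecMul_vecMul, Matrix.nonsing_inv_mul W (IsUnit.mk0 _ hf), Matrix.vecMul_one]
  refine ⟨∑ i, c i • f i, Submodule.sum_mem _ fun i _ =>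
    Submodule.smul_mem _ _ (Submodule.subset_span ⟨i, rfl⟩), fun j hj => ?_⟩
  simpa [Matrix.vecMul, dotProduct, W] using congrFun vecMul_eq ⟨j, hj⟩

/-- The second order difference operator that intertwines with `diffOp A B C` through `darbouxOp f`
when the span of `f` is invariant under `diffOp A B C`; see `darbouxDiffOp_darbouxOp`. -/
def darbouxDiffOp (A B C : K → K) (f : Fin k → K → K) : (K → K) →ₗ[K] (K → K) :=
  diffOp (fun x => A x * casoratian f (x + 1) / casoratian f x)
    (fun x => B (x + k) +
      (C (x + k) * casoratianMinor f (k - 1) (x + 1) / casoratian f (x + 1) -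
        C (x + k - 1) * casoratianMinor f (k - 1) x / casoratian f x))
    (fun x => C (x + k) * casoratian f x / casoratian f (x + 1))

lemma darbouxDiffOp_darbouxOp_of_vanishing (A B C : K → K) {f : Fin (k + 1) → K → K} {x : K}
    (h₀ : casoratian f x ≠ 0) (h₁ : casoratian f (x + 1) ≠ 0) {v : K → K}
    (hv : ∀ j < k + 1, v (x + (j : K)) = 0) :
    darbouxDiffOp A B C f (darbouxOp f v) x = darbouxOp f (diffOp A B C v) x := by
  rw [darbouxDiffOp, diffOp_apply, darbouxOp_sub_one_of_vanishing f hv,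
    darbouxOp_of_vanishing f hv, darbouxOp_add_one_of_vanishing f hv,
    darbouxOp_diffOp_of_vanishing A B C f hv, Nat.add_sub_cancel,
    show x + ((k + 1 : ℕ) : K) - 1 = x + k by push_cast; ring,
    show x + 1 + (k : K) = x + ((k + 1 : ℕ) : K) by push_cast; ring]
  field_simp
  ring

-- Both sides depend on `u` only modulo the span of `f`, so `u` may be assumed to vanish at
-- `x, …, x + k - 1`.
theorem darbouxDiffOp_darbouxOp {A B C : K → K} {f : Fin k → K → K} (hk : 0 < k)
    (hf : ∀ i, diffOp A B C (f i) ∈ Submodule.span K (Set.range f)) {x : K}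
    (h₀ : casoratian f x ≠ 0) (h₁ : casoratian f (x + 1) ≠ 0) (u : K → K) :
    darbouxDiffOp A B C f (darbouxOp f u) x = darbouxOp f (diffOp A B C u) x := by
  obtain _ | k := k
  · exact absurd hk (lt_irrefl 0)
  obtain ⟨w, hw, hwu⟩ := exists_mem_span_eq_at_nodes h₀ u
  obtain ⟨v, rfl⟩ : ∃ v, u = v + w := ⟨u - w, (sub_add_cancel u w).symm⟩
  have v_vanishing : ∀ j < k + 1, v (x + (j : K)) = 0 := fun j hj => by
    simpa using hwu j hj
  have diffOp_w_mem : diffOp A B C w ∈ Submodule.span K (Set.range f) := by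
    have span_le_comap : Submodule.span K (Set.range f) ≤
        (Submodule.span K (Set.range f)).comap (diffOp A B C) :=
      Submodule.span_le.2 (Set.range_subset_iff.2 hf)
    exact span_le_comap hw
  rw [map_add (diffOp A B C), map_add (darbouxOp f), map_add (darbouxOp f),
    darbouxOp_eq_zero_of_mem_span hw, darbouxOp_eq_zero_of_mem_span diffOp_w_mem, add_zero,
    add_zero, darbouxDiffOp_darbouxOp_of_vanishing A B C h₀ h₁ v_vanishing]

end Casoratian

section Pochhammer

lemma poch_zero (z : ℝ) : poch z 0 = 1 :=
  prod_range_zero _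

lemma poch_succ (z : ℝ) (m : ℕ) : poch z (m + 1) = poch z m * (z + m) :=
  prod_range_succ _ m

lemma poch_add (z : ℝ) (m l : ℕ) : poch z (m + l) = poch z m * poch (z + m) l := by
  simp only [poch, prod_range_add, Nat.cast_add, add_assoc]

lemma poch_succ_left (z : ℝ) (m : ℕ) : poch z (m + 1) = z * poch (z + 1) m := by
  rw [add_comm, poch_add, poch_succ, poch_zero, Nat.cast_zero, Nat.cast_one, one_mul, add_zero]

lemma poch_ne_zero {z : ℝ} {m : ℕ} (h : ∀ i < m, z + (i : ℝ) ≠ 0) : poch z m ≠ 0 :=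
  prod_ne_zero_iff.2 fun i hi => h i (mem_range.1 hi)

lemma poch_ne_zero_of_le {z : ℝ} {j m : ℕ} (hjm : j ≤ m) (h : poch z m ≠ 0) : poch z j ≠ 0 := by
  obtain ⟨l, rfl⟩ := Nat.exists_eq_add_of_le hjm
  exact left_ne_zero_of_mul (poch_add z j l ▸ h)

lemma poch_neg_natCast_eq_zero {m j : ℕ} (h : m < j) : poch (-(m : ℝ)) j = 0 :=
  prod_eq_zero (mem_range.2 h) (neg_add_cancel _)

lemma mul_poch_neg_sub_one (x : ℝ) (l : ℕ) :
    x * poch (-(x - 1)) l = (x - l) * poch (-x) l := by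
  have h := (poch_succ_left (-x) l).symm.trans (poch_succ (-x) l)
  rw [show -x + 1 = -(x - 1) by ring] at h
  linear_combination -h

lemma mul_poch_neg_add_one (x : ℝ) (l : ℕ) :
    (x + 1 - l) * poch (-(x + 1)) l = (x + 1) * poch (-x) l := by
  have h := mul_poch_neg_sub_one (x + 1) l
  rw [add_sub_cancel_right] at h
  exact h.symm

@[fun_prop]
lemma differentiable_poch (m : ℕ) : Differentiable ℝ fun z => poch z m := by
  unfold poch
  fun_prop

end Pochhammer

section HahnOperator

-- A lower bidiagonal operator: `κ` is the coefficient sequence of its eigenvector of degree `n`.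
lemma map_sum_eq_smul_of_bidiagonal {R V : Type*} [CommRing R] [AddCommGroup V] [Module R V]
    (T : V →ₗ[R] V) (e : ℕ → V) (μ c κ : ℕ → R) (h_zero : T (e 0) = μ 0 • e 0)
    (h_succ : ∀ j, T (e (j + 1)) = μ (j + 1) • e (j + 1) - c j • e j) (n : ℕ)
    (hκ : ∀ j < n, κ j * (μ j - μ n) = κ (j + 1) * c j) :
    T (∑ j ∈ range (n + 1), κ j • e j) = μ n • ∑ j ∈ range (n + 1), κ j • e j := by
  have partial_sum : ∀ k ≤ n, T (∑ j ∈ range (k + 1), κ j • e j) =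
      μ n • (∑ j ∈ range (k + 1), κ j • e j) + (κ k * (μ k - μ n)) • e k := by
    intro k
    induction k with
    | zero =>
      intro _
      simp only [zero_add, sum_range_one, map_smul, h_zero]
      module
    | succ k ih =>
      intro hk
      rw [sum_range_succ, map_add, ih (by omega), map_smul, h_succ, hκ k hk]
      module
  simpa using partial_sum n le_rfl

/-- The second order difference operator whose eigenfunctions are the Hahn polynomials
`h_n^{a,b,N}`, with eigenvalues `λ^{a,b}(n)`. -/
noncomputable def hahnOp (a b N : ℝ) : (ℝ → ℝ) →ₗ[ℝ] (ℝ → ℝ) :=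
  diffOp (fun x => x * (x - b - N - 1))
    (fun x => -(x * (x - b - N - 1)) - (x + a + 1) * (x - N))
    (fun x => (x + a + 1) * (x - N))

lemma hahnOp_apply (a b N : ℝ) (u : ℝ → ℝ) (x : ℝ) :
    hahnOp a b N u x = x * (x - b - N - 1) * u (x - 1) +
      (-(x * (x - b - N - 1)) - (x + a + 1) * (x - N)) * u x +
      (x + a + 1) * (x - N) * u (x + 1) :=
  rfl

lemma hahnOp_poch_zero (a b N : ℝ) : hahnOp a b N (fun x => poch (-x) 0) = 0 := by
  ext x
  simp only [hahnOp_apply, poch_zero, Pi.zero_apply]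
  ring

lemma hahnOp_poch_succ (a b N : ℝ) (j : ℕ) :
    hahnOp a b N (fun x => poch (-x) (j + 1)) =
      lam a b ((j + 1 : ℕ) : ℝ) • (fun x => poch (-x) (j + 1)) -
        ((j + 1) * (j + 1 + a) * (j - N)) • (fun x => poch (-x) j) := by
  ext x
  have left_shift := mul_poch_neg_sub_one x (j + 1)
  have right_shift : poch (-(x + 1)) (j + 1) = -(x + 1) * poch (-x) j := by
    rw [poch_succ_left, show -(x + 1) + 1 = -x by ring]
  simp only [hahnOp_apply, Pi.sub_apply, Pi.smul_apply, smul_eq_mul, lam]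
  rw [right_shift]
  rw [poch_succ (-x) j] at left_shift ⊢
  push_cast at left_shift ⊢
  linear_combination (x - b - N - 1) * left_shift

/-- The coefficient of `(-x)_j` in the Hahn polynomial `h_n^{a,b,N}(x)`. -/
noncomputable def hahnCoeff (a b N : ℝ) (n j : ℕ) : ℝ :=
  poch (-(n : ℝ)) j * poch (a + b + (n : ℝ) + 1) j * poch (-N + (j : ℝ)) (n - j) *
    poch (a + (j : ℝ) + 1) (n - j) / (j.factorial : ℝ)

lemma hahn_eq_sum_smul (a b N : ℝ) (n : ℕ) :
    hahn a b N n = ∑ j ∈ range (n + 1), hahnCoeff a b N n j • fun x => poch (-x) j := by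
  ext x
  simp only [hahn, hahnCoeff, Finset.sum_apply, Pi.smul_apply, smul_eq_mul, div_mul_eq_mul_div]

lemma hahnCoeff_recurrence (a b N : ℝ) {n j : ℕ} (hj : j < n) :
    hahnCoeff a b N n j * (lam a b j - lam a b n) =
      hahnCoeff a b N n (j + 1) * ((j + 1) * (j + 1 + a) * (j - N)) := by
  obtain ⟨l, rfl⟩ := Nat.exists_eq_add_of_lt hj
  have factorial_ne_zero : (j.factorial : ℝ) ≠ 0 := by positivity
  simp only [hahnCoeff, lam]
  rw [show j + l + 1 - j = l + 1 by omega, show j + l + 1 - (j + 1) = l by omega,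
    poch_succ_left (-N + j), poch_succ_left (a + j + 1), poch_succ _ j, poch_succ _ j,
    Nat.factorial_succ, show -N + (j : ℝ) + 1 = -N + ((j + 1 : ℕ) : ℝ) by push_cast; ring,
    show a + (j : ℝ) + 1 + 1 = a + ((j + 1 : ℕ) : ℝ) + 1 by push_cast; ring]
  push_cast
  field_simp
  ring

theorem hahnOp_hahn (a b N : ℝ) (n : ℕ) :
    hahnOp a b N (hahn a b N n) = lam a b n • hahn a b N n := by
  rw [hahn_eq_sum_smul]
  refine map_sum_eq_smul_of_bidiagonal (hahnOp a b N) (fun j x => poch (-x) j)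
    (fun j => lam a b j) _ _ ?_ (hahnOp_poch_succ a b N) n
    fun j hj => hahnCoeff_recurrence a b N hj
  rw [hahnOp_poch_zero, lam, Nat.cast_zero, zero_mul, zero_smul]

-- Conjugating by `(-x)_l` exchanges the parameters `-l` and `l`.
lemma hahnOp_poch_mul_shift {a : ℝ} {l : ℕ} (ha : a = -(l : ℝ)) (b N : ℝ) (u : ℝ → ℝ) (x : ℝ) :
    hahnOp a b N (fun y => poch (-y) l * u (y + a)) x =
      poch (-x) l * (hahnOp (-a) b (a + N) u (x + a) - a * (b + 1) * u (x + a)) := by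
  have left_shift := mul_poch_neg_sub_one x l
  have right_shift := mul_poch_neg_add_one x l
  subst ha
  simp only [hahnOp_apply]
  rw [show x + -(l : ℝ) - 1 = x - 1 + -l by ring, show x + -(l : ℝ) + 1 = x + 1 + -l by ring]
  linear_combination (x - b - N - 1) * u (x - 1 + -l) * left_shift +
    (x - N) * u (x + 1 + -l) * right_shift

lemma hahnOp_poch_mul_hahn {a : ℝ} {l : ℕ} (ha : a = -(l : ℝ)) (b N : ℝ) (n : ℕ) :
    hahnOp a b N (fun x => poch (-x) l * hahn (-a) b (a + N) n (x + a)) =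
      lam a b (n - a) • fun x => poch (-x) l * hahn (-a) b (a + N) n (x + a) := by
  ext x
  rw [hahnOp_poch_mul_shift ha, hahnOp_hahn]
  simp only [Pi.smul_apply, smul_eq_mul, lam]
  ring

lemma hahnOp_sub_left (a b N s : ℝ) (u : ℝ → ℝ) (x : ℝ) :
    hahnOp (a - s) b N u x = hahnOp a b N u x - s * ((x - N) * (u (x + 1) - u x)) := by
  simp only [hahnOp_apply]
  ring

lemma hasDerivAt_hahnOp (a b N : ℝ) {φ : ℝ → ℝ → ℝ} {φ' : ℝ → ℝ} {s₀ : ℝ}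
    (hφ : ∀ y, HasDerivAt (fun s => φ s y) (φ' y) s₀) (x : ℝ) :
    HasDerivAt (fun s => hahnOp a b N (φ s) x) (hahnOp a b N φ' x) s₀ :=
  (((hφ (x - 1)).const_mul _).add ((hφ x).const_mul _)).add ((hφ (x + 1)).const_mul _)

end HahnOperator

section ParameterDerivative

lemma lam_eq_of_add_eq {a b x y : ℝ} (h : x + y = -a - b - 1) : lam a b x = lam a b y := by
  rw [lam, lam, show y = -a - b - 1 - x by linarith]
  ring

variable (α β : ℤ) {N : ℝ} {u : ℕ}

lemma exists_phiH_eq_smul_hahn {s : ℝ} (hN : poch (-N) u ≠ 0)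
    (hs : poch ((α : ℝ) - s + 1) u ≠ 0) : ∃ c : ℝ, phiH α β N u s = c • hahn (α - s) β N u := by
  refine ⟨poch ((α : ℝ) + 1) (max u (-α - β - (u : ℤ) - 1).toNat) *
    poch (-N) (max u (-α - β - (u : ℤ) - 1).toNat) /
      (poch ((α : ℝ) - s + 1) u * poch (-N) u), ?_⟩
  ext x
  simp only [phiH, hahn, Pi.smul_apply, smul_eq_mul]
  rw [div_mul_eq_mul_div, mul_div_assoc, sum_div]
  congr 1
  refine sum_congr rfl fun j hj => ?_
  obtain ⟨l, rfl⟩ := Nat.exists_eq_add_of_le (mem_range_succ_iff.1 hj)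
  rw [poch_add] at hN hs
  have hN_low := left_ne_zero_of_mul hN
  have hN_high := right_ne_zero_of_mul hN
  have hs_low := left_ne_zero_of_mul hs
  have hs_high := right_ne_zero_of_mul hs
  have factorial_ne_zero : (j.factorial : ℝ) ≠ 0 := by positivity
  rw [poch_add _ j l, poch_add _ j l, Nat.add_sub_cancel_left,
    show ((j + l : ℕ) : ℝ) - s + α + β + 1 = α - s + β + ((j + l : ℕ) : ℝ) + 1 by ring,
    show (α : ℝ) - s + j + 1 = α - s + 1 + j by ring]
  field_simp

lemma hahnOp_phiH {s : ℝ} (hN : poch (-N) u ≠ 0) (hs : poch ((α : ℝ) - s + 1) u ≠ 0) :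
    hahnOp (α - s) β N (phiH α β N u s) = lam (α - s) β u • phiH α β N u s := by
  obtain ⟨c, hc⟩ := exists_phiH_eq_smul_hahn α β hN hs
  rw [hc, map_smul, hahnOp_hahn, smul_comm]

lemma differentiableAt_phiH (hN : poch (-N) u ≠ 0) (hα : poch ((α : ℝ) + 1) u ≠ 0) (x : ℝ) :
    DifferentiableAt ℝ (fun s => phiH α β N u s x) 0 := by
  unfold phiH
  refine (DifferentiableAt.fun_sum fun j hj => ?_).const_mul _
  have hj : j ≤ u := mem_range_succ_iff.1 hj
  refine DifferentiableAt.fun_div (by fun_prop) (by fun_prop) ?_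
  rw [sub_zero]
  exact mul_ne_zero (mul_ne_zero (poch_ne_zero_of_le hj hα) (poch_ne_zero_of_le hj hN))
    (Nat.cast_ne_zero.2 j.factorial_ne_zero)

/-- The function `∂_s φ_u^{α,β,N}(0, x)` of `x`. -/
noncomputable def phiDeriv (α β : ℤ) (N : ℝ) (u : ℕ) (x : ℝ) : ℝ :=
  deriv (fun s => phiH α β N u s x) 0

-- Differentiate at `s = 0` the eigenvalue equation of `phiH α β N u s`, in which `s` enters the
-- operator and the eigenvalue linearly.
lemma hahnOp_phiDeriv (hN : poch (-N) u ≠ 0) (hα : poch ((α : ℝ) + 1) u ≠ 0) (x : ℝ) :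
    hahnOp α β N (phiDeriv α β N u) x = lam α β u * phiDeriv α β N u x +
      ((x - N) * (phiH α β N u 0 (x + 1) - phiH α β N u 0 x) - u * phiH α β N u 0 x) := by
  have hasDerivAt_phi (y : ℝ) :
      HasDerivAt (fun s => phiH α β N u s y) (phiDeriv α β N u y) 0 :=
    (differentiableAt_phiH α β hN hα y).hasDerivAt
  have eventually_ne_zero : ∀ᶠ s in nhds (0 : ℝ), poch ((α : ℝ) - s + 1) u ≠ 0 :=
    ContinuousAt.eventually_ne
      (DifferentiableAt.continuousAt (𝕜 := ℝ) (by fun_prop)) (by rwa [sub_zero])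
  have perturbed_equation : ∀ᶠ s in nhds (0 : ℝ),
      hahnOp α β N (phiH α β N u s) x = lam α β u * phiH α β N u s x +
        s * ((x - N) * (phiH α β N u s (x + 1) - phiH α β N u s x) - u * phiH α β N u s x) := by
    filter_upwards [eventually_ne_zero] with s hs
    have h := congrFun (hahnOp_phiH α β hN hs) x
    rw [hahnOp_sub_left, Pi.smul_apply, smul_eq_mul, lam] at h
    rw [lam]
    linear_combination h
  have deriv_right := ((hasDerivAt_phi x).const_mul (lam α β u)).add
    ((hasDerivAt_id (0 : ℝ)).mul
      ((((hasDerivAt_phi (x + 1)).sub (hasDerivAt_phi x)).const_mul (x - N)).sub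
        ((hasDerivAt_phi x).const_mul (u : ℝ))))
  have h := (hasDerivAt_hahnOp α β N hasDerivAt_phi x).unique
    (deriv_right.congr_of_eventuallyEq perturbed_equation)
  simpa using h

lemma phiH_zero_reflect {n m : ℕ} (hnm : (n : ℤ) + m = -α - β - 1) (hmn : m ≤ n) :
    phiH α β N n 0 = phiH α β N m 0 := by
  have cast_hnm : (n : ℝ) + m = -α - β - 1 := by exact_mod_cast hnm
  ext x
  simp only [phiH]
  rw [show (-α - β - (n : ℤ) - 1).toNat = m by omega,
    show (-α - β - (m : ℤ) - 1).toNat = n by omega, max_comm m n,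
    show (n : ℝ) - 0 + α + β + 1 = -m by linarith, show (m : ℝ) - 0 + α + β + 1 = -n by linarith]
  simp only [mul_comm (poch (-(n : ℝ)) _)]
  congr 1
  refine (sum_subset (range_mono (by omega)) fun j _ hj => ?_).symm
  rw [poch_neg_natCast_eq_zero (by simpa using hj)]
  simp only [zero_mul, zero_div]

lemma hahnOp_phiDeriv_sub {n m : ℕ} (hnm : (n : ℤ) + m = -α - β - 1) (hmn : m ≤ n)
    (hN : poch (-N) n ≠ 0) (hα : poch ((α : ℝ) + 1) n ≠ 0) :
    hahnOp α β N (phiDeriv α β N n - phiDeriv α β N m) =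
      lam α β n • (phiDeriv α β N n - phiDeriv α β N m) + ((m : ℝ) - n) • phiH α β N m 0 := by
  have lam_eq : lam (α : ℝ) β m = lam α β n :=
    lam_eq_of_add_eq (by rw [add_comm]; exact_mod_cast hnm)
  ext x
  rw [map_sub, Pi.sub_apply, hahnOp_phiDeriv α β hN hα,
    hahnOp_phiDeriv α β (poch_ne_zero_of_le hmn hN) (poch_ne_zero_of_le hmn hα),
    phiH_zero_reflect α β hnm hmn, lam_eq]
  simp only [Pi.add_apply, Pi.sub_apply, Pi.smul_apply, smul_eq_mul]
  ring

lemma phiH_eq_zero_of_poch_eq_zero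
    (hN : poch (-N) (max u (-α - β - (u : ℤ) - 1).toNat) = 0) : phiH α β N u = 0 := by
  ext s x
  rw [phiH, hN, mul_zero, zero_mul, Pi.zero_apply, Pi.zero_apply]

end ParameterDerivative

section HhatInvariance

variable {α β : ℤ}

lemma ceil_half_le_iff (k : ℤ) (n : ℕ) : ⌈(k : ℚ) / 2⌉ ≤ (n : ℤ) ↔ k ≤ 2 * n := by
  rw [Int.ceil_le, div_le_iff₀ two_pos, mul_comm]
  exact_mod_cast Iff.rfl

lemma Hhat_eq_phiDeriv_sub (N : ℝ) (M : ℕ → ℝ) {n m : ℕ} (hnm : (n : ℤ) + m = -α - β - 1)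
    (hmn : m < n) (hnα : (n : ℤ) ≤ -α - 1) :
    Hhat α β N M n = phiDeriv α β N n - phiDeriv α β N m := by
  ext x
  rw [Hhat, if_pos ⟨(ceil_half_le_iff _ n).2 (by omega), hnα⟩,
    show (-α - β - (n : ℤ) - 1).toNat = m by omega]
  rfl

lemma exists_Hhat_eq_smul_add_smul (N : ℝ) (M : ℕ → ℝ) {n m l k : ℕ}
    (hm : (n : ℤ) + m = -α - β - 1) (hl : (l : ℤ) = -α) (hk : (k : ℤ) = α + n) :
    ∃ p q : ℝ, Hhat α β N M n =
      p • (fun x => poch (-x) l * hahn (-α) β (α + N) k (x + α)) + q • hahn α β N m := by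
  refine ⟨(-1 : ℝ) ^ (β + (n : ℤ)) * (β + (n : ℤ)).toNat.factorial * m.factorial,
    (-1 : ℝ) ^ (β + (n : ℤ)) * (β + (n : ℤ)).toNat.factorial *
      (k.factorial * poch (-N - α - β - n - 1) (2 * (n : ℤ) + α + β + 1).toNat / (M k - 1)), ?_⟩
  ext x
  rw [Hhat, if_neg (by omega), if_pos (by omega),
    show (-α - β - (n : ℤ) - 1).toNat = m by omega, show (α + (n : ℤ)).toNat = k by omega,
    show (-α).toNat = l by omega]
  simp only [Pi.add_apply, Pi.smul_apply, smul_eq_mul]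
  ring

lemma Hhat_eq_hahn (N : ℝ) (M : ℕ → ℝ) {n : ℕ}
    (h_low : ¬(-α - β ≤ 2 * (n : ℤ) ∧ (n : ℤ) ≤ -α - 1))
    (h_mid : ¬(-α ≤ (n : ℤ) ∧ (n : ℤ) ≤ -α - β - 1)) :
    Hhat α β N M n = hahn α β N n := by
  ext x
  rw [Hhat, if_neg (by rwa [ceil_half_le_iff]), if_neg h_mid]

theorem exists_hahnOp_Hhat_eq_add_smul (hβ : β ≤ 0) (N : ℝ) (M : ℕ → ℝ) {n m : ℕ}
    (hnm : (n : ℤ) + m = -α - β - 1) (hmn : m < n) (hnα : (n : ℤ) ≤ -α - 1) :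
    ∃ d : ℝ, hahnOp α β N (Hhat α β N M n) =
      lam α β n • Hhat α β N M n + d • Hhat α β N M m := by
  have Hhat_n := Hhat_eq_phiDeriv_sub N M hnm hmn hnα
  by_cases hN : poch (-N) n = 0
  · have Hhat_n_eq_zero : Hhat α β N M n = 0 := by
      ext x
      rw [Hhat_n, Pi.sub_apply, phiDeriv, phiDeriv,
        phiH_eq_zero_of_poch_eq_zero α β (u := n) (by rwa [max_eq_left (by omega)]),
        phiH_eq_zero_of_poch_eq_zero α β (u := m)
          (by rwa [show max m (-α - β - (m : ℤ) - 1).toNat = n by omega])]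
      exact sub_self _
    exact ⟨0, by rw [Hhat_n_eq_zero, map_zero, smul_zero, zero_smul, add_zero]⟩
  have hα : poch ((α : ℝ) + 1) n ≠ 0 := poch_ne_zero fun i hi => by
    exact_mod_cast (by omega : α + 1 + (i : ℤ) ≠ 0)
  obtain ⟨c, hc⟩ := exists_phiH_eq_smul_hahn α β (s := 0) (poch_ne_zero_of_le hmn.le hN)
    (by rw [sub_zero]; exact poch_ne_zero_of_le hmn.le hα)
  refine ⟨(m - n) * c, ?_⟩
  rw [Hhat_n, Hhat_eq_hahn N M (n := m) (by omega) (by omega),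
    hahnOp_phiDeriv_sub α β hnm hmn.le hN hα, hc, sub_zero, smul_smul]

theorem hahnOp_Hhat (hα : α ≤ 0) (N : ℝ) (M : ℕ → ℝ) {n : ℕ}
    (h_low : ¬(-α - β ≤ 2 * (n : ℤ) ∧ (n : ℤ) ≤ -α - 1)) :
    hahnOp α β N (Hhat α β N M n) = lam α β n • Hhat α β N M n := by
  by_cases h_mid : -α ≤ (n : ℤ) ∧ (n : ℤ) ≤ -α - β - 1
  · obtain ⟨l, hl⟩ := Int.eq_ofNat_of_zero_le (neg_nonneg.2 hα)
    obtain ⟨m, hm⟩ := Int.eq_ofNat_of_zero_le (by omega : 0 ≤ -α - β - n - 1)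
    obtain ⟨k, hk⟩ := Int.eq_ofNat_of_zero_le (by omega : 0 ≤ α + n)
    have lam_m : lam (α : ℝ) β m = lam α β n :=
      lam_eq_of_add_eq (by exact_mod_cast (by omega : (m : ℤ) + n = -α - β - 1))
    have lam_k : lam (α : ℝ) β (k - α) = lam α β n := by
      rw [show (k : ℝ) - α = n by exact_mod_cast (by omega : (k : ℤ) - α = n)]
    obtain ⟨p, q, hpq⟩ := exists_Hhat_eq_smul_add_smul N M
      (by omega : (n : ℤ) + m = -α - β - 1) hl.symm hk.symm
    rw [hpq, map_add, map_smul, map_smul, hahnOp_hahn,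
      hahnOp_poch_mul_hahn (by exact_mod_cast (by omega : α = -(l : ℤ))), lam_m, lam_k,
      smul_add, smul_comm p, smul_comm q]
  · rw [Hhat_eq_hahn N M h_low h_mid, hahnOp_hahn]

end HhatInvariance

section ExceptionalHahn

lemma range_elemOf (F : Finset ℕ) : Set.range (elemOf F) = F :=
  F.range_orderEmbOfFin rfl

lemma exHahn_eq_darbouxOp (α β : ℤ) (N : ℝ) (M : ℕ → ℝ) (F : Finset ℕ) (n : ℕ) :
    exHahn α β N M F n =
      darbouxOp (fun i => Hhat α β N M (elemOf F i)) (Hhat α β N M (n - uF F)) := by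
  ext x
  rw [exHahn, darbouxOp_apply, casoratian]
  congr 2
  ext i j
  refine Fin.cases ?_ (fun i => ?_) i <;> rfl

lemma OmegaH_eq_casoratian (α β : ℤ) (N : ℝ) (M : ℕ → ℝ) (F : Finset ℕ) :
    OmegaH α β N M F = casoratian fun i => Hhat α β N M (elemOf F i) :=
  rfl

lemma LambdaH_eq_casoratianMinor (α β : ℤ) (N : ℝ) (M : ℕ → ℝ) (F : Finset ℕ) :
    LambdaH α β N M F = casoratianMinor (fun i => Hhat α β N M (elemOf F i)) (F.card - 1) := by
  ext x
  rw [LambdaH, casoratianMinor]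
  congr 2
  ext i j
  congr 3
  have := j.isLt
  split_ifs <;> omega

lemma hahnOp_Hhat_mem_span {α β : ℤ} (hα : α ≤ 0) (hβ : β ≤ 0) (N : ℝ) (M : ℕ → ℝ)
    {F : Finset ℕ} (hF : ∀ k : ℕ, -β ≤ (k : ℤ) → (k : ℤ) ≤ -α - 1 → k ∈ F) (i : Fin F.card) :
    hahnOp α β N (Hhat α β N M (elemOf F i)) ∈
      Submodule.span ℝ (Set.range fun i => Hhat α β N M (elemOf F i)) := by
  have Hhat_mem {k : ℕ} (hk : k ∈ F) : Hhat α β N M k ∈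
      Submodule.span ℝ (Set.range fun i => Hhat α β N M (elemOf F i)) := by
    obtain ⟨i, rfl⟩ : k ∈ Set.range (elemOf F) := by rwa [range_elemOf]
    exact Submodule.subset_span ⟨i, rfl⟩
  have elemOf_mem : elemOf F i ∈ F := coe_mem _
  generalize elemOf F i = n at elemOf_mem
  by_cases h_low : -α - β ≤ 2 * (n : ℤ) ∧ (n : ℤ) ≤ -α - 1
  · obtain ⟨m, hm⟩ := Int.eq_ofNat_of_zero_le (by omega : 0 ≤ -α - β - n - 1)
    obtain ⟨d, hd⟩ := exists_hahnOp_Hhat_eq_add_smul hβ N M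
      (by omega : (n : ℤ) + m = -α - β - 1) (by omega) h_low.2
    rw [hd]
    exact add_mem (Submodule.smul_mem _ _ (Hhat_mem elemOf_mem))
      (Submodule.smul_mem _ _ (Hhat_mem (hF m (by omega) (by omega))))
  · rw [hahnOp_Hhat hα N M h_low]
    exact Submodule.smul_mem _ _ (Hhat_mem elemOf_mem)

end ExceptionalHahn

theorem exceptional_hahn_difference_equation_general
    (α β : ℤ) (N : ℝ) (M : ℕ → ℝ) (F : Finset ℕ)
    (hαβ : α ≤ β) (hβ : β ≤ 0) (_hM : ∀ i, M i ≠ 1) (hF : F.Nonempty)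
    (hFc : ∀ k : ℕ, -β ≤ (k : ℤ) → (k : ℤ) ≤ -α - 1 → k ∈ F)
    (n : ℕ) (hn : inSigma F n) (x : ℝ)
    (hx : OmegaH α β N M F x * OmegaH α β N M F (x + 1) ≠ 0) :
    (x * (x - (β : ℝ) - N - 1) * OmegaH α β N M F (x + 1) / OmegaH α β N M F x) *
        exHahn α β N M F n (x - 1) +
      (-((x + (F.card : ℝ)) * (x - (β : ℝ) - N - 1 + (F.card : ℝ))) -
          (x + (α : ℝ) + 1 + (F.card : ℝ)) * (x - N + (F.card : ℝ)) +
          ((x + 1 + (α : ℝ) + (F.card : ℝ)) * (x - N + (F.card : ℝ)) *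
              LambdaH α β N M F (x + 1) / OmegaH α β N M F (x + 1) -
            (x + (α : ℝ) + (F.card : ℝ)) * (x - N - 1 + (F.card : ℝ)) *
              LambdaH α β N M F x / OmegaH α β N M F x)) *
        exHahn α β N M F n x +
      ((x + (α : ℝ) + (F.card : ℝ) + 1) * (x - N + (F.card : ℝ)) *
          OmegaH α β N M F x / OmegaH α β N M F (x + 1)) *
        exHahn α β N M F n (x + 1) =
    lam (α : ℝ) (β : ℝ) ((n - uF F : ℕ) : ℝ) * exHahn α β N M F n x := by
  obtain ⟨h₀, h₁⟩ := mul_ne_zero_iff.1 hx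
  have intertwining := darbouxDiffOp_darbouxOp (card_pos.2 hF)
    (hahnOp_Hhat_mem_span (hαβ.trans hβ) hβ N M hFc) h₀ h₁ (Hhat α β N M (n - uF F))
  have eigen : hahnOp α β N (Hhat α β N M (n - uF F)) =
      lam α β ((n - uF F : ℕ) : ℝ) • Hhat α β N M (n - uF F) :=
    hahnOp_Hhat (hαβ.trans hβ) N M fun h => hn.2 (hFc _ (by omega) h.2)
  change _ = darbouxOp _ (hahnOp α β N _) x at intertwining
  rw [eigen, map_smul, ← exHahn_eq_darbouxOp, darbouxDiffOp, diffOp_apply,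
    ← OmegaH_eq_casoratian, ← LambdaH_eq_casoratianMinor, Pi.smul_apply, smul_eq_mul]
    at intertwining
  rw [← intertwining]
  ring

/-- second order difference equation for the exceptional Hahn polynomials. -/
theorem exceptional_hahn_difference_equation
    (α β : ℤ) (N : ℝ) (M : ℕ → ℝ) (F : Finset ℕ)
    (hαβ : α ≤ β) (hβ : β ≤ -1)
    (hN : ∀ k : ℕ, N ≠ -(k : ℝ))
    (hM : ∀ i, M i ≠ 0 ∧ M i ≠ 1)
    (hFpos : ∀ f ∈ F, 0 < f)
    (hFc : ∀ k : ℕ, -β ≤ (k : ℤ) → (k : ℤ) ≤ -α - β - 1 → k ∈ F)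
    (n : ℕ) (hn : inSigma F n) (x : ℝ)
    (hx : OmegaH α β N M F x * OmegaH α β N M F (x + 1) ≠ 0) :
    (x * (x - (β : ℝ) - N - 1) * OmegaH α β N M F (x + 1) / OmegaH α β N M F x) *
        exHahn α β N M F n (x - 1) +
      (-((x + (F.card : ℝ)) * (x - (β : ℝ) - N - 1 + (F.card : ℝ))) -
          (x + (α : ℝ) + 1 + (F.card : ℝ)) * (x - N + (F.card : ℝ)) +
          ((x + 1 + (α : ℝ) + (F.card : ℝ)) * (x - N + (F.card : ℝ)) *
              LambdaH α β N M F (x + 1) / OmegaH α β N M F (x + 1) -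
            (x + (α : ℝ) + (F.card : ℝ)) * (x - N - 1 + (F.card : ℝ)) *
              LambdaH α β N M F x / OmegaH α β N M F x)) *
        exHahn α β N M F n x +
      ((x + (α : ℝ) + (F.card : ℝ) + 1) * (x - N + (F.card : ℝ)) *
          OmegaH α β N M F x / OmegaH α β N M F (x + 1)) *
        exHahn α β N M F n (x + 1) =
    lam (α : ℝ) (β : ℝ) ((n - uF F : ℕ) : ℝ) * exHahn α β N M F n x := by
  exact exceptional_hahn_difference_equation_general α β N M F hαβ (by omega) (fun i => (hM i).2)
    ⟨(-β).toNat, hFc _ (by omega) (by omega)⟩ (fun k h₁ h₂ => hFc k h₁ (by omega)) n hn x hx
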